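/- arXiv:2107.09937 — 8 statements merged into one kernel-verified Lean document; each statement's English description precedes it below -/
import Mathlib

section
/- Let E be a real normed space, H a real inner product space, φ : E → H a feature map, and f : ℝ → ℝ an antitone (non-increasing) function such that ⟨φ(u), φ(v)⟩ = f(‖u − v‖) for all u, v ∈ E. Then for every c ≥ 0, every x ∈ E and every δ ∈ E with ‖δ‖ ≤ c, one has ‖φ(x + δ) − φ(x)‖ ≤ √(2·f(0) − 2·f(c)). -/
open scoped RealInnerProductSpace

/-- Perturbation bound in the kernel space: if the kernel is translation-invariant and radial,
`⟪φ u, φ v⟫ = f ‖u - v‖` with `f` antitone, then a perturbation of norm at most `c` in the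
original space moves the feature image by at most `√(2 f 0 - 2 f c)`. -/
theorem featureMap_perturbation_norm_le
    {E H : Type*} [NormedAddCommGroup E] [NormedSpace ℝ E]
    [NormedAddCommGroup H] [InnerProductSpace ℝ H]
    (φ : E → H) (f : ℝ → ℝ) (hf : Antitone f)
    (hk : ∀ u v : E, ⟪φ u, φ v⟫ = f ‖u - v‖) :
    ∀ c : ℝ, 0 ≤ c → ∀ x δ : E, ‖δ‖ ≤ c →
      ‖φ (x + δ) - φ x‖ ≤ Real.sqrt (2 * f 0 - 2 * f c) := by
  intro c _ x δ hδ
  have hsq : ‖φ (x + δ) - φ x‖ ^ 2 = 2 * f 0 - 2 * f ‖δ‖ := by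
    rw [norm_sub_sq_real, ← real_inner_self_eq_norm_sq, ← real_inner_self_eq_norm_sq, hk, hk, hk,
      sub_self, sub_self, norm_zero, add_sub_cancel_left]
    ring
  apply Real.le_sqrt_of_sq_le
  linarith [hf hδ]
end

section
/- Let E be a real normed space, H a real inner product space, φ : E → H a feature map, and f : ℝ → ℝ an antitone (non-increasing) function such that ⟨φ(u), φ(v)⟩ = f(‖u − v‖) for all u, v ∈ E. Then for every c ≥ 0, every w ∈ H, every x ∈ E and every δ ∈ E with ‖δ‖ ≤ c, one has ⟨w, φ(x + δ)⟩ ≤ ⟨w, φ(x)⟩ + √(2·f(0) − 2·f(c)) · ‖w‖. Consequently, the supremum of ⟨w, φ(x + δ)⟩ over ‖δ‖ ≤ c is at most the supremum of ⟨w, φ(x) + δ_φ⟩ over all δ_φ ∈ H with ‖δ_φ‖ ≤ √(2·f(0) − 2·f(c)). -/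
open scoped RealInnerProductSpace

/-- The feature map of an antitone radial kernel moves points at distance at most `c` by at most
`√(2 f(0) - 2 f(c))`. -/
theorem norm_featureMap_sub_le
    {E H : Type*} [NormedAddCommGroup E] [NormedAddCommGroup H] [InnerProductSpace ℝ H]
    {φ : E → H} {f : ℝ → ℝ} (hf : Antitone f)
    (hk : ∀ u v : E, ⟪φ u, φ v⟫ = f ‖u - v‖) {c : ℝ} {u v : E} (huv : ‖u - v‖ ≤ c) :
    ‖φ u - φ v‖ ≤ Real.sqrt (2 * f 0 - 2 * f c) := by
  apply Real.le_sqrt_of_sq_le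
  rw [norm_sub_sq_real, ← real_inner_self_eq_norm_sq, ← real_inner_self_eq_norm_sq, hk, hk, hk,
    sub_self, sub_self, norm_zero]
  linarith [hf huv]

/-- Theorem 1 of the paper (Xu et al.): for a translation-invariant radial kernel
`⟪φ u, φ v⟫ = f ‖u - v‖` with `f` antitone, a bounded input perturbation is dominated, after
feature mapping, by an explicit additive perturbation in the kernel space; consequently the
corresponding suprema are ordered. -/
theorem featureMap_perturbation_inner_le
    {E H : Type*} [NormedAddCommGroup E] [NormedSpace ℝ E]
    [NormedAddCommGroup H] [InnerProductSpace ℝ H]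
    (φ : E → H) (f : ℝ → ℝ) (hf : Antitone f)
    (hk : ∀ u v : E, ⟪φ u, φ v⟫ = f ‖u - v‖)
    (c : ℝ) (hc : 0 ≤ c) (w : H) (x : E) :
    (∀ δ : E, ‖δ‖ ≤ c →
      ⟪w, φ (x + δ)⟫ ≤ ⟪w, φ x⟫ + Real.sqrt (2 * f 0 - 2 * f c) * ‖w‖)
    ∧ sSup {r : ℝ | ∃ δ : E, ‖δ‖ ≤ c ∧ r = ⟪w, φ (x + δ)⟫}
        ≤ sSup {r : ℝ | ∃ dφ : H, ‖dφ‖ ≤ Real.sqrt (2 * f 0 - 2 * f c) ∧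
            r = ⟪w, φ x + dφ⟫} := by
  have hφ : ∀ δ : E, ‖δ‖ ≤ c → ‖φ (x + δ) - φ x‖ ≤ Real.sqrt (2 * f 0 - 2 * f c) :=
    fun δ hδ => norm_featureMap_sub_le hf hk (by simpa using hδ)
  have hw : ∀ d : H, ‖d‖ ≤ Real.sqrt (2 * f 0 - 2 * f c) →
      ⟪w, φ x + d⟫ ≤ ⟪w, φ x⟫ + Real.sqrt (2 * f 0 - 2 * f c) * ‖w‖ := by
    intro d hd
    rw [inner_add_right, mul_comm]
    gcongr
    exact (real_inner_le_norm w d).trans (by gcongr)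
  refine ⟨fun δ hδ => ?_, csSup_le_csSup ?_ ?_ ?_⟩
  · simpa using hw _ (hφ δ hδ)
  · refine ⟨⟪w, φ x⟫ + Real.sqrt (2 * f 0 - 2 * f c) * ‖w‖, ?_⟩
    rintro _ ⟨d, hd, rfl⟩
    exact hw d hd
  · exact ⟨_, 0, by simpa using hc, rfl⟩
  · rintro _ ⟨δ, hδ, rfl⟩
    exact ⟨_, hφ δ hδ, by simp⟩
end

section
/- Let H be a real inner product space, w ∈ H, v ∈ H, b ∈ ℝ, ε′ ≥ 0, and y ∈ {−1, +1}. Then the value [1 − y·⟨w, v⟩ + ε′·‖w‖ − y·b]₊ is the greatest element (IsGreatest) of the set { [1 − y·(⟨w, v + δ⟩ + b)]₊ : δ ∈ H, ‖δ‖ ≤ ε′ }. In particular, the maximization problem max_{‖δ‖ ≤ ε′} [1 − y·(⟨w, v + δ⟩ + b)]₊ has closed-form optimal value [1 − y·⟨w, v⟩ + ε′·‖w‖ − y·b]₊. -/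
open scoped RealInnerProductSpace

/-- Theorem 2 of the paper: the adversarial hinge loss
`max_{‖δ‖ ≤ ε'} [1 - y(⟨w, v + δ⟩ + b)]₊` has closed-form optimal value
`[1 - y⟨w, v⟩ + ε'‖w‖ - yb]₊`, i.e. the latter is the greatest element of the set of
attainable losses. -/
theorem adversarial_hinge_isGreatest
    {H : Type*} [NormedAddCommGroup H] [InnerProductSpace ℝ H]
    (w v : H) (b ε' : ℝ) (hε' : 0 ≤ ε') (y : ℝ) (hy : y = 1 ∨ y = -1) :
    IsGreatest
      {r : ℝ | ∃ δ : H, ‖δ‖ ≤ ε' ∧ r = max (1 - y * (⟪w, v + δ⟫ + b)) 0}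
      (max (1 - y * ⟪w, v⟫ + ε' * ‖w‖ - y * b) 0) := by
  have hyy : y * y = 1 := by rcases hy with rfl | rfl <;> norm_num
  have hyabs : |y| = 1 := by rcases hy with rfl | rfl <;> simp
  constructor
  · refine ⟨-(y * ε' / ‖w‖) • w, ?_, ?_⟩
    · rw [norm_smul, norm_neg, norm_div, norm_mul, norm_norm, Real.norm_eq_abs,
        Real.norm_eq_abs, hyabs, abs_of_nonneg hε', one_mul]
      rw [div_mul_eq_mul_div, mul_div_assoc]
      exact mul_le_of_le_one_right hε' (div_self_le_one _)
    · have hinner : ⟪w, -(y * ε' / ‖w‖) • w⟫ = -(y * ε' * ‖w‖) := by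
        rw [real_inner_smul_right, real_inner_self_eq_norm_sq]
        rcases eq_or_ne ‖w‖ 0 with hw | hw
        · simp [hw]
        · field_simp
      rw [inner_add_right, hinner]
      congr 1
      linear_combination -ε' * ‖w‖ * hyy
  · rintro _ ⟨δ, hδ, rfl⟩
    have hbound : -(y * ⟪w, δ⟫) ≤ ε' * ‖w‖ :=
      calc -(y * ⟪w, δ⟫) ≤ |y * ⟪w, δ⟫| := neg_le_abs _
        _ = |⟪w, δ⟫| := by rw [abs_mul, hyabs, one_mul]
        _ ≤ ‖w‖ * ‖δ‖ := abs_real_inner_le_norm w δ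
        _ ≤ ‖w‖ * ε' := by gcongr
        _ = ε' * ‖w‖ := mul_comm _ _
    rw [inner_add_right]
    exact max_le_max_right 0 (by linarith)
end

section
/- Let H be a real inner product space, n ≥ 1, C > 0, ε′ ≥ 0, and let (v_i, y_i) for i = 1, …, n satisfy v_i ∈ H and y_i ∈ {−1, +1}. Then for every w ∈ H and b ∈ ℝ, (1/2)‖w‖² + (C/n)·Σ_{i=1}^n sup{ [1 − y_i·(⟨w, v_i + δ⟩ + b)]₊ : δ ∈ H, ‖δ‖ ≤ ε′ } = (1/2)‖w‖² + (C/n)·Σ_{i=1}^n [1 − y_i·⟨w, v_i⟩ + ε′·‖w‖ − y_i·b]₊. That is, the min–max adversarial training objective of kernel SVM coincides pointwise with the convex regularized-loss objective. -/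
open scoped RealInnerProductSpace

/-- The worst-case hinge loss over a ball of perturbations is attained, and equals the hinge loss
with margin enlarged by the perturbation budget times the norm of the weight vector. -/
theorem isGreatest_hinge_perturbation
    {H : Type*} [NormedAddCommGroup H] [InnerProductSpace ℝ H]
    {ε' : ℝ} (hε' : 0 ≤ ε') (v w : H) {y : ℝ} (hy : |y| = 1) (b : ℝ) :
    IsGreatest {r : ℝ | ∃ δ : H, ‖δ‖ ≤ ε' ∧ r = max (1 - y * (⟪w, v + δ⟫ + b)) 0}
      (max (1 - y * ⟪w, v⟫ + ε' * ‖w‖ - y * b) 0) := by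
  have hyy : y * y = 1 := by rw [← abs_mul_abs_self, hy, one_mul]
  constructor
  · refine ⟨(-(y * ε' * ‖w‖⁻¹)) • w, ?_, ?_⟩
    · rw [norm_smul, Real.norm_eq_abs, abs_neg, abs_mul, abs_mul, hy, abs_of_nonneg hε', abs_inv,
        abs_norm, one_mul, mul_assoc]
      exact mul_le_of_le_one_right hε' (inv_mul_le_one (a := ‖w‖))
    · congr 1
      have hw : ‖w‖⁻¹ * ‖w‖ ^ 2 = ‖w‖ := by
        rcases eq_or_ne ‖w‖ 0 with h | h
        · simp [h]
        · field_simp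
      rw [inner_add_right, real_inner_smul_right, real_inner_self_eq_norm_sq]
      linear_combination (-(ε' * ‖w‖)) * hyy - y * y * ε' * hw
  · rintro r ⟨δ, hδ, rfl⟩
    refine max_le_max_right 0 ?_
    have h : -(y * ⟪w, δ⟫) ≤ ε' * ‖w‖ :=
      calc -(y * ⟪w, δ⟫) ≤ |y * ⟪w, δ⟫| := neg_le_abs _
        _ = |⟪w, δ⟫| := by rw [abs_mul, hy, one_mul]
        _ ≤ ‖w‖ * ‖δ‖ := abs_real_inner_le_norm w δ
        _ ≤ ε' * ‖w‖ := by rw [mul_comm]; gcongr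
    rw [inner_add_right]
    linarith

/-- Reduction of the min–max adversarial training objective of kernel SVM (Eq. (4)) to the
convex regularized-loss objective (Eq. (5)): the two objectives coincide pointwise. -/
theorem adversarial_training_objective_eq
    {H : Type*} [NormedAddCommGroup H] [InnerProductSpace ℝ H]
    (n : ℕ) (hn : 1 ≤ n) (C ε' : ℝ) (hC : 0 < C) (hε' : 0 ≤ ε')
    (v : Fin n → H) (y : Fin n → ℝ) (hy : ∀ i, y i = 1 ∨ y i = -1)
    (w : H) (b : ℝ) :
    (1 / 2) * ‖w‖ ^ 2 + (C / n) * ∑ i,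
        sSup {r : ℝ | ∃ δ : H, ‖δ‖ ≤ ε' ∧ r = max (1 - y i * (⟪w, v i + δ⟫ + b)) 0}
      = (1 / 2) * ‖w‖ ^ 2 + (C / n) * ∑ i,
          max (1 - y i * ⟪w, v i⟫ + ε' * ‖w‖ - y i * b) 0 := by
  congr 2
  refine Finset.sum_congr rfl fun i _ => ?_
  have hyi : |y i| = 1 := by rcases hy i with h | h <;> simp [h]
  exact (isGreatest_hinge_perturbation hε' (v i) w hyi b).csSup_eq
end

section
/- Let θ ∈ (1/2, 1], let t ≥ 1 be a natural number, and let s : ℕ → ℝ satisfy 1/θ ≤ s_j ≤ j/θ for all 2 ≤ j ≤ t. For 1 ≤ i ≤ t define a_t^i := (θ/i) · ∏_{j=i+1}^{t} (1 − (θ/j)·s_j). Then 0 ≤ a_t^i ≤ θ/t for every 1 ≤ i ≤ t, and Σ_{i=1}^{t} (a_t^i)² ≤ θ²/t. -/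
/-- The telescoping product `∏_{j=i+1}^t (1 - 1/j) = i/t`. -/
theorem prod_Icc_one_sub_one_div {i t : ℕ} (hi : 1 ≤ i) (hit : i ≤ t) :
    ∏ j ∈ Finset.Icc (i + 1) t, (1 - 1 / (j : ℝ)) = i / t := by
  have hi0 : (i : ℝ) ≠ 0 := by positivity
  induction t, hit using Nat.le_induction with
  | base => simp [hi0]
  | succ n hn ih =>
    have hn0 : (n : ℝ) ≠ 0 := by
      have : n ≠ 0 := by omega
      exact_mod_cast this
    have hn1 : (n : ℝ) + 1 ≠ 0 := by positivity
    rw [Finset.prod_Icc_succ_top (by omega), ih]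
    push_cast
    field_simp
    ring

/-- Coefficient bounds for the DSG update with diminishing stepsize `γ_j = θ/j`:
the coefficients `a_t^i = (θ/i) ∏_{j=i+1}^t (1 - (θ/j) s_j)` satisfy `0 ≤ a_t^i ≤ θ/t`
and `∑_{i=1}^t (a_t^i)² ≤ θ²/t`, provided `1/θ ≤ s_j ≤ j/θ` for `2 ≤ j ≤ t`. -/
theorem dsg_coeff_bounds_diminishing (θ : ℝ) (hθ : θ ∈ Set.Ioc (1 / 2 : ℝ) 1)
    (t : ℕ) (ht : 1 ≤ t) (s : ℕ → ℝ)
    (hs : ∀ j : ℕ, 2 ≤ j → j ≤ t → 1 / θ ≤ s j ∧ s j ≤ (j : ℝ) / θ)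
    (a : ℕ → ℝ)
    (ha : ∀ i : ℕ, 1 ≤ i → i ≤ t →
      a i = (θ / i) * ∏ j ∈ Finset.Icc (i + 1) t, (1 - (θ / j) * s j)) :
    (∀ i : ℕ, 1 ≤ i → i ≤ t → 0 ≤ a i ∧ a i ≤ θ / t)
      ∧ ∑ i ∈ Finset.Icc 1 t, (a i) ^ 2 ≤ θ ^ 2 / t := by
  have hθ0 : 0 < θ := by linarith [hθ.1]
  have ht0 : (0 : ℝ) < t := by exact_mod_cast ht
  have factor_bounds : ∀ j : ℕ, 2 ≤ j → j ≤ t →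
      0 ≤ 1 - (θ / j) * s j ∧ 1 - (θ / j) * s j ≤ 1 - 1 / (j : ℝ) := by
    intro j hj hjt
    obtain ⟨hl, hu⟩ := hs j hj hjt
    have hj0 : (0 : ℝ) < j := by exact_mod_cast (by omega : 0 < j)
    rw [div_le_iff₀' hθ0] at hl
    rw [le_div_iff₀' hθ0] at hu
    rw [div_mul_eq_mul_div]
    exact ⟨sub_nonneg.2 ((div_le_one hj0).2 hu), by gcongr⟩
  have coeff_bounds : ∀ i : ℕ, 1 ≤ i → i ≤ t → 0 ≤ a i ∧ a i ≤ θ / t := by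
    intro i hi hit
    have hi0 : (0 : ℝ) < i := by exact_mod_cast hi
    have hfac : ∀ j ∈ Finset.Icc (i + 1) t,
        0 ≤ 1 - (θ / j) * s j ∧ 1 - (θ / j) * s j ≤ 1 - 1 / (j : ℝ) := by
      intro j hj
      rw [Finset.mem_Icc] at hj
      exact factor_bounds j (by omega) hj.2
    rw [ha i hi hit]
    refine ⟨mul_nonneg (by positivity) (Finset.prod_nonneg fun j hj => (hfac j hj).1), ?_⟩
    calc (θ / i) * ∏ j ∈ Finset.Icc (i + 1) t, (1 - (θ / j) * s j)
        ≤ (θ / i) * ∏ j ∈ Finset.Icc (i + 1) t, (1 - 1 / (j : ℝ)) :=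
          mul_le_mul_of_nonneg_left
            (Finset.prod_le_prod (fun j hj => (hfac j hj).1) fun j hj => (hfac j hj).2)
            (by positivity)
      _ = θ / t := by
          rw [prod_Icc_one_sub_one_div hi hit]
          field_simp
  refine ⟨coeff_bounds, ?_⟩
  calc ∑ i ∈ Finset.Icc 1 t, (a i) ^ 2 ≤ ∑ _i ∈ Finset.Icc 1 t, (θ / t) ^ 2 := by
        refine Finset.sum_le_sum fun i hi => ?_
        rw [Finset.mem_Icc] at hi
        obtain ⟨h0, h1⟩ := coeff_bounds i hi.1 hi.2
        exact pow_le_pow_left₀ h0 h1 2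
    _ = θ ^ 2 / t := by
        simp only [Finset.sum_const, Nat.card_Icc, Nat.add_sub_cancel, nsmul_eq_mul]
        field_simp
end

section
/- Let η ∈ (1, 2], β > 0 and β₀ > 0. Suppose the real sequence (Γ_t)_{t ≥ 1} satisfies Γ₁ ≥ 0 and Γ_{t+1} ≤ (1 − η/t)·Γ_t + β/t² for all t ≥ 1. Let R₀ := (β₀ + √(β₀² + 4(η − 1)β)) / (2(η − 1)) and R := max{Γ₁, 2β, R₀²}. Then Γ_t ≤ R/t for all t ≥ 1. -/
/-- The recursion bound for any constant `R` dominating `Γ 1`, `2 * β` and `β / (η - 1)`. -/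
lemma le_div_of_recursion {η β R : ℝ} {Γ : ℕ → ℝ} (hη1 : 1 < η) (hη2 : η ≤ 2)
    (hΓ1 : 0 ≤ Γ 1)
    (hrec : ∀ t : ℕ, 1 ≤ t → Γ (t + 1) ≤ (1 - η / t) * Γ t + β / (t : ℝ) ^ 2)
    (hΓR : Γ 1 ≤ R) (hβR : 2 * β ≤ R) (hR : β ≤ (η - 1) * R) (t : ℕ) (ht : 1 ≤ t) :
    Γ t ≤ R / t := by
  induction t, ht using Nat.le_induction with
  | base => simpa using hΓR
  | succ t ht ih =>
    have h := hrec t ht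
    rcases ht.eq_or_lt with rfl | ht2
    · norm_num at h ⊢
      nlinarith
    · have ht2' : (2 : ℝ) ≤ t := by exact_mod_cast ht2
      have ht0 : (0 : ℝ) < t := by linarith
      have hcoef : 0 ≤ 1 - η / t := by
        rw [sub_nonneg, div_le_one ht0]
        linarith
      push_cast
      calc Γ (t + 1) ≤ (1 - η / t) * Γ t + β / (t : ℝ) ^ 2 := h
        _ ≤ (1 - η / t) * (R / t) + β / (t : ℝ) ^ 2 := by gcongr
        _ = ((t - η) * R + β) / (t : ℝ) ^ 2 := by field_simp
        _ ≤ R / (t + 1) := by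
          rw [div_le_div_iff₀ (by positivity) (by positivity)]
          nlinarith

/-- The larger root `R₀` of `(η - 1) x² = β₀ x + β` satisfies `β ≤ (η - 1) R₀²`. -/
lemma le_mul_sq_larger_root {η β β₀ : ℝ} (hη : 1 < η) (hβ : 0 ≤ β) (hβ₀ : 0 ≤ β₀) :
    β ≤ (η - 1) * ((β₀ + √(β₀ ^ 2 + 4 * (η - 1) * β)) / (2 * (η - 1))) ^ 2 := by
  have hη' : 0 < η - 1 := sub_pos.2 hη
  have hs : √(β₀ ^ 2 + 4 * (η - 1) * β) ^ 2 = β₀ ^ 2 + 4 * (η - 1) * β :=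
    Real.sq_sqrt (by positivity)
  set s := √(β₀ ^ 2 + 4 * (η - 1) * β)
  have hs0 : 0 ≤ s := Real.sqrt_nonneg _
  have heq : (η - 1) * ((β₀ + s) / (2 * (η - 1))) ^ 2 = (β₀ + s) ^ 2 / (4 * (η - 1)) := by
    field_simp
    norm_num
  rw [heq, le_div_iff₀ (by positivity)]
  nlinarith [mul_nonneg hβ₀ hs0, sq_nonneg β₀]

/-- The paper's recursion lemma (Lemma `recursion bounds`): if `Γ₁ ≥ 0` and
`Γ_{t+1} ≤ (1 - η/t) Γ_t + β/t²` with `η ∈ (1, 2]`, then `Γ_t ≤ R/t` for all `t ≥ 1`,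
where `R = max{Γ₁, 2β, R₀²}` and `R₀ = (β₀ + √(β₀² + 4(η-1)β)) / (2(η-1))`. -/
theorem recursion_bound (η β β₀ : ℝ) (hη : η ∈ Set.Ioc (1 : ℝ) 2)
    (hβ : 0 < β) (hβ₀ : 0 < β₀) (Γ : ℕ → ℝ) (hΓ1 : 0 ≤ Γ 1)
    (hrec : ∀ t : ℕ, 1 ≤ t → Γ (t + 1) ≤ (1 - η / t) * Γ t + β / (t : ℝ) ^ 2) :
    ∀ t : ℕ, 1 ≤ t →
      Γ t ≤ max (Γ 1) (max (2 * β)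
        (((β₀ + Real.sqrt (β₀ ^ 2 + 4 * (η - 1) * β)) / (2 * (η - 1))) ^ 2)) / t := by
  refine le_div_of_recursion hη.1 hη.2 hΓ1 hrec (le_max_left _ _)
    (le_max_of_le_right (le_max_left _ _)) ?_
  exact (le_mul_sq_larger_root hη.1 hβ.le hβ₀.le).trans <|
    mul_le_mul_of_nonneg_left (le_max_of_le_right (le_max_right _ _)) (sub_nonneg.2 hη.1.le)
end

section
/- Let θ ∈ (1/2, 1] and β > 0. Suppose the real sequence (e_t)_{t ≥ 1} satisfies e₁ ≥ 0 and e_{t+1} ≤ (1 − 2θ/t)·e_t + β/t² for all t ≥ 1. Then for all t ≥ 1, e_t ≤ Q²/t, where Q² := max{e₁, 2β, β/(2θ − 1)}. -/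
/-- One step of the recursion `e_{t+1} ≤ (1 - 2θ/t) e_t + β/t²` preserves the bound `e_t ≤ Q/t`
once `t ≥ 2θ`, provided `Q ≥ 0` and `β ≤ (2θ - 1) Q`. -/
lemma contraction_step_le_div_succ {θ β Q x t : ℝ} (ht : 0 < t) (hθt : 2 * θ ≤ t) (hQ : 0 ≤ Q)
    (hβQ : β ≤ (2 * θ - 1) * Q) (hx : x ≤ Q / t) :
    (1 - 2 * θ / t) * x + β / t ^ 2 ≤ Q / (t + 1) := by
  have hcoef : 0 ≤ 1 - 2 * θ / t := sub_nonneg.2 ((div_le_one ht).2 hθt)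
  calc (1 - 2 * θ / t) * x + β / t ^ 2
      ≤ (1 - 2 * θ / t) * (Q / t) + (2 * θ - 1) * Q / t ^ 2 := by gcongr
    _ = Q * (t - 1) / t ^ 2 := by field_simp; ring
    _ ≤ Q / (t + 1) := by
      rw [div_le_div_iff₀ (by positivity) (by positivity)]
      linarith

/-- Deterministic core of the paper's Lemma 2 (error due to random data, diminishing stepsize):
if `e₁ ≥ 0` and `e_{t+1} ≤ (1 - 2θ/t) e_t + β/t²` with `θ ∈ (1/2, 1]`, then
`e_t ≤ Q²/t` for all `t ≥ 1`, where `Q² = max{e₁, 2β, β/(2θ - 1)}`. -/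
theorem error_recursion_diminishing (θ β : ℝ) (hθ : θ ∈ Set.Ioc (1 / 2 : ℝ) 1)
    (hβ : 0 < β) (e : ℕ → ℝ) (he1 : 0 ≤ e 1)
    (hrec : ∀ t : ℕ, 1 ≤ t → e (t + 1) ≤ (1 - 2 * θ / t) * e t + β / (t : ℝ) ^ 2) :
    ∀ t : ℕ, 1 ≤ t →
      e t ≤ max (e 1) (max (2 * β) (β / (2 * θ - 1))) / t := by
  obtain ⟨hθ₀, hθ₁⟩ := hθ
  set Q := max (e 1) (max (2 * β) (β / (2 * θ - 1)))
  have he1Q : e 1 ≤ Q := le_max_left _ _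
  have h2βQ : 2 * β ≤ Q := (le_max_left _ _).trans (le_max_right _ _)
  have hβQ : β ≤ (2 * θ - 1) * Q :=
    (div_le_iff₀' (by linarith)).1 ((le_max_right _ _).trans (le_max_right _ _))
  intro t ht
  induction t, ht using Nat.le_induction with
  | base => simpa using he1Q
  | succ t ht ih =>
    have hstep := hrec t ht
    rcases ht.eq_or_lt with rfl | ht2
    · norm_num at hstep ⊢
      nlinarith
    · have ht2' : (2 : ℝ) ≤ t := by exact_mod_cast ht2
      push_cast
      exact hstep.trans (contraction_step_le_div_succ (by linarith) (by linarith)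
        (he1.trans he1Q) hβQ ih)
end

section
/- Let B > 0, ε > 0, ϑ ∈ (0, 1], and set η := εϑ/(2B); assume η ≤ 1/2. Let (e_t)_{t ≥ 1} be a real sequence with e₁ > 0 satisfying e_{t+1} ≤ (1 − 2η)·e_t + 2η²·B for all t ≥ 1. Then for every natural number T with T ≥ B·log(2e₁/ε)/(ϑε), one has e_{T+1} ≤ ε. -/
/-- Unrolling an affine contraction `e (t + 1) ≤ (1 - a) e t + a c` with `c ≥ 0`. -/
theorem le_exp_mul_add_of_affine_recursion {a c : ℝ} (ha1 : a ≤ 1) (hc : 0 ≤ c)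
    {e : ℕ → ℝ} (hrec : ∀ t : ℕ, 1 ≤ t → e (t + 1) ≤ (1 - a) * e t + a * c) (T : ℕ)
    (he1 : 0 ≤ e 1) :
    e (T + 1) ≤ Real.exp (-(a * T)) * e 1 + c := by
  have unrolled : e (T + 1) ≤ (1 - a) ^ T * e 1 + c := by
    induction T with
    | zero => simpa using hc
    | succ T ih =>
      calc e (T + 1 + 1) ≤ (1 - a) * e (T + 1) + a * c := hrec _ (Nat.le_add_left 1 T)
        _ ≤ (1 - a) * ((1 - a) ^ T * e 1 + c) + a * c := by
          have := mul_le_mul_of_nonneg_left ih (sub_nonneg.2 ha1)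
          linarith
        _ = (1 - a) ^ (T + 1) * e 1 + c := by ring
  have pow_le : (1 - a) ^ T ≤ Real.exp (-(a * T)) := by
    calc (1 - a) ^ T ≤ Real.exp (-a) ^ T :=
          pow_le_pow_left₀ (sub_nonneg.2 ha1) (Real.one_sub_le_exp_neg a) T
      _ = Real.exp (-(a * T)) := by rw [← Real.exp_nat_mul]; congr 1; ring
  have := mul_le_mul_of_nonneg_right pow_le he1
  linarith

/-- Deterministic core of the paper's Lemma 5 (error due to random data, constant stepsize):
with `η = εϑ/(2B)`, the recursion `e_{t+1} ≤ (1 - 2η) e_t + 2η²B` reaches accuracy `ε` after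
`T ≥ B log(2e₁/ε)/(ϑε)` iterations. -/
theorem error_recursion_constant_eps (B ε ϑ : ℝ) (hB : 0 < B) (hε : 0 < ε)
    (hϑ : ϑ ∈ Set.Ioc (0 : ℝ) 1) (η : ℝ) (hη : η = ε * ϑ / (2 * B)) (hη2 : η ≤ 1 / 2)
    (e : ℕ → ℝ) (he1 : 0 < e 1)
    (hrec : ∀ t : ℕ, 1 ≤ t → e (t + 1) ≤ (1 - 2 * η) * e t + 2 * η ^ 2 * B) :
    ∀ T : ℕ, (T : ℝ) ≥ B * Real.log (2 * e 1 / ε) / (ϑ * ε) → e (T + 1) ≤ ε := by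
  intro T hT
  obtain ⟨hϑ0, hϑ1⟩ := hϑ
  have hηB : η * B = ε * ϑ / 2 := by rw [hη]; field_simp
  have hη0 : 0 < η := by rw [hη]; positivity
  have hlog : Real.log (2 * e 1 / ε) ≤ 2 * η * T := by
    rw [ge_iff_le, div_le_iff₀ (by positivity)] at hT
    have : B * Real.log (2 * e 1 / ε) ≤ B * (2 * η * T) := by
      linear_combination hT - 2 * T * hηB
    exact le_of_mul_le_mul_left this hB
  have hexp : Real.exp (-(2 * η * T)) * e 1 ≤ ε / 2 := by
    calc Real.exp (-(2 * η * T)) * e 1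
        ≤ Real.exp (-Real.log (2 * e 1 / ε)) * e 1 := by gcongr
      _ = ε / 2 := by
        rw [Real.exp_neg, Real.exp_log (by positivity)]
        field_simp
  have hbound := le_exp_mul_add_of_affine_recursion (a := 2 * η) (c := η * B) (by linarith)
    (by positivity) (fun t ht => (hrec t ht).trans_eq (by ring)) T he1.le
  have : ε * ϑ ≤ ε := mul_le_of_le_one_right hε.le hϑ1
  linarith
end
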